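/- Fix σ > 0, α ∈ (0,1), and let z_α = Φ⁻¹(α) where Φ is the standard normal CDF. For each m ∈ ℕ let θ_m ∈ ℝ, let ν_m denote the gaussian(θ_m, σ²) measure on ℝ, and let T_m ⊆ ℝ be a Lebesgue-measurable set with ν_m(T_m) → 1 as m → ∞. Let u_m : ℝ → ℝ be measurable functions such that F_TN(y; u_m(y), σ², T_m) = 1 − α for every y ∈ T_m. Then for every ε > 0, ν_m({y ∈ T_m : |u_m(y) − (y + z_α σ)| > ε}) / ν_m(T_m) → 0 as m → ∞; that is, conditional on the truncation event, the quantile conditionally unbiased estimator converges in probability to the conventional (unconditional) quantile estimator y + z_α σ. -/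

import Mathlib

open MeasureTheory ProbabilityTheory Filter

/-- The truncated normal CDF: `F_TN(z; μ, σ², T)` is the Gaussian weight of `T ∩ (-∞, z]`
divided by the Gaussian weight of `T` (with value 0 when the denominator vanishes, matching
the Lean convention `x / 0 = 0`). -/
noncomputable def FTN (z μ σ2 : ℝ) (T : Set ℝ) : ℝ :=
  (∫ t in T ∩ Set.Iic z, Real.exp (-(t - μ) ^ 2 / (2 * σ2))) /
    (∫ t in T, Real.exp (-(t - μ) ^ 2 / (2 * σ2)))

/-- The standard normal CDF `Φ(x) = ∫_{-∞}^{x} (2π)^{-1/2} exp(-t²/2) dt`. -/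
noncomputable def Phi (x : ℝ) : ℝ :=
  ∫ t in Set.Iic x, (Real.sqrt (2 * Real.pi))⁻¹ * Real.exp (-t ^ 2 / 2)


lemma gr_real (μ : ℝ) (v : NNReal) (hv : v ≠ 0) (S : Set ℝ) :
    (gaussianReal μ v).real S = ∫ t in S, gaussianPDFReal μ v t := by
  rw [Measure.real, gaussianReal_apply_eq_integral μ hv, ENNReal.toReal_ofReal]
  exact integral_nonneg fun t => gaussianPDFReal_nonneg μ v t

lemma Phi_eq (x : ℝ) : Phi x = (gaussianReal 0 1).real (Set.Iic x) := by
  rw [gr_real _ _ one_ne_zero, Phi]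
  simp [gaussianPDFReal]

lemma Phi_strictMono : StrictMono Phi := by
  intro a b hab
  rw [Phi_eq, Phi_eq]
  have h : (gaussianReal 0 1).real (Set.Iic b) =
      (gaussianReal 0 1).real (Set.Iic a) + (gaussianReal 0 1).real (Set.Ioc a b) := by
    rw [← measureReal_union _ measurableSet_Ioc, Set.Iic_union_Ioc_eq_Iic hab.le]
    rw [Set.disjoint_left]
    intro t h1 h2
    exact absurd h2.1 (not_lt.2 h1)
  have h2 : 0 < (gaussianReal 0 1).real (Set.Ioc a b) := by
    rw [measureReal_def, ENNReal.toReal_pos_iff]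
    refine ⟨pos_iff_ne_zero.2 fun h0 => ?_, measure_lt_top _ _⟩
    have := gaussianReal_absolutelyContinuous' 0 (one_ne_zero : (1 : NNReal) ≠ 0) h0
    simp at this
    linarith
  linarith

lemma Phi_neg (x : ℝ) : Phi (-x) = 1 - Phi x := by
  rw [Phi_eq, Phi_eq]
  have := nullSingletonClass_gaussianReal (μ := 0) (v := 1) one_ne_zero
  have h1 : (gaussianReal 0 1).real (Set.Iic (-x)) = (gaussianReal 0 1).real (Set.Ici x) := by
    have := gaussianReal_map_neg (μ := 0) (v := 1)
    rw [neg_zero] at this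
    conv_lhs => rw [← this]
    rw [map_measureReal_apply measurable_neg measurableSet_Iic]
    congr 1
    ext t; simp
  rw [h1, measureReal_congr Ioi_ae_eq_Ici.symm, ← Set.compl_Iic,
    probReal_compl_eq_one_sub measurableSet_Iic]

lemma real_Iic (σ : ℝ) (hσ : 0 < σ) (μ y : ℝ) :
    (gaussianReal μ (NNReal.mk (σ ^ 2) (sq_nonneg σ))).real (Set.Iic y) = Phi ((y - μ) / σ) := by
  have h1 := gaussianReal_map_const_mul (μ := 0) (v := 1) σ
  have h2 := gaussianReal_map_add_const (μ := σ * 0) (v := (NNReal.mk (σ ^ 2) (sq_nonneg σ)) * 1) μ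
  rw [← h1, mul_zero, zero_add, mul_one] at h2
  rw [← h2, map_measureReal_apply (by fun_prop) measurableSet_Iic,
    map_measureReal_apply (by fun_prop) (measurableSet_Iic.preimage (by fun_prop)), Phi_eq]
  congr 1
  ext t
  simp only [Set.mem_preimage, Set.mem_Iic]
  rw [le_div_iff₀ hσ]
  constructor <;> intro h <;> linarith

lemma FTN_eq (σ : ℝ) (hσ : 0 < σ) (y μ : ℝ) (T : Set ℝ) :
    FTN y μ (σ ^ 2) T = (gaussianReal μ (NNReal.mk (σ ^ 2) (sq_nonneg σ))).real (T ∩ Set.Iic y) /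
      (gaussianReal μ (NNReal.mk (σ ^ 2) (sq_nonneg σ))).real T := by
  have hv : (NNReal.mk (σ ^ 2) (sq_nonneg σ)) ≠ 0 := by
    intro h; exact (pow_pos hσ 2).ne' (congrArg NNReal.toReal h)
  rw [gr_real _ _ hv, gr_real _ _ hv]
  simp only [gaussianPDFReal, integral_const_mul, FTN]
  rw [mul_div_mul_left]
  · rfl
  · have : 0 < σ ^ 2 := by positivity
    have h2 : (0:ℝ) < √(2 * Real.pi * σ ^ 2) := by positivity
    exact (inv_pos.2 h2).ne'

lemma key (v : NNReal) (hv : v ≠ 0) (M δ : ℝ) (hδ : 0 < δ) :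
    ∃ η > 0, ∀ θ μ : ℝ, ∀ A : Set ℝ, |μ - θ| ≤ M →
      (gaussianReal θ v).real A ≤ η → (gaussianReal μ v).real A < δ := by
  have hv0 : (0 : ℝ) < v := by positivity
  set c : ℝ := (√(2 * Real.pi * v))⁻¹ with hc
  have hc0 : 0 < c := by positivity
  set C : ℝ := Real.exp (M ^ 2 / (2 * v)) with hC
  have hC0 : 0 < C := Real.exp_pos _
  let x0 : ℝ → ℝ := fun t => Real.exp (-(1 / (8 * v)) * t ^ 2)
  have hx0 : Integrable x0 := integrable_exp_neg_mul_sq (by positivity)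
  set J : ℝ := c * ∫ t, x0 t with hJ
  have hJ0 : 0 ≤ J := mul_nonneg hc0.le (integral_nonneg fun t => (Real.exp_pos _).le)
  set d : ℝ := δ / (4 * C * (J + 1)) with hd
  have hd0 : 0 < d := by positivity
  refine ⟨δ * d ^ 2 / (4 * C), by positivity, ?_⟩
  intro θ μ A hM hA
  rw [gr_real _ _ hv] at hA ⊢
  have hpt : ∀ t, gaussianPDFReal μ v t ≤
      C / d ^ 2 * gaussianPDFReal θ v t + C * d * c * x0 (t - θ) := by
    intro t
    have e1 : Real.exp (-(t - μ) ^ 2 / (2 * v)) ≤ C * x0 (t - θ) ^ 2 := by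
      rw [hC, ← Real.exp_nat_mul, ← Real.exp_add, Real.exp_le_exp]
      have h1 : (μ - θ) ^ 2 ≤ M ^ 2 := by
        rw [← sq_abs]; exact pow_le_pow_left₀ (abs_nonneg _) hM 2
      have : M ^ 2 / (2 * v) + (2 : ℕ) * (-(1 / (8 * v)) * (t - θ) ^ 2)
          = (M ^ 2 - (t - θ) ^ 2 / 2) / (2 * (v : ℝ)) := by
        push_cast; field_simp; ring
      rw [this]
      apply div_le_div_of_nonneg_right _ (by positivity)
      nlinarith [sq_nonneg ((t - θ) - 2 * (μ - θ))]
    have e2 : Real.exp (-(t - θ) ^ 2 / (2 * v)) = x0 (t - θ) ^ 4 := by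
      rw [← Real.exp_nat_mul]; congr 1; push_cast; field_simp; ring
    have hx : 0 < x0 (t - θ) := Real.exp_pos _
    have e3 : x0 (t - θ) ^ 2 ≤ x0 (t - θ) ^ 4 / d ^ 2 + d * x0 (t - θ) := by
      generalize x0 (t - θ) = x at hx
      rcases le_total x d with h | h
      · have : 0 ≤ x ^ 4 / d ^ 2 := by positivity
        nlinarith
      · have : x ^ 2 ≤ x ^ 4 / d ^ 2 := by
          rw [le_div_iff₀ (by positivity)]
          have : d ^ 2 ≤ x ^ 2 := by gcongr
          nlinarith [sq_nonneg x]
        have : 0 ≤ d * x := by positivity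
        linarith
    simp only [gaussianPDFReal]
    rw [e2, ← hc]
    calc c * Real.exp (-(t - μ) ^ 2 / (2 * v))
        ≤ c * (C * (x0 (t - θ) ^ 4 / d ^ 2 + d * x0 (t - θ))) := by gcongr; exact e1.trans (by gcongr)
      _ = _ := by ring
  have i1 := integrable_gaussianPDFReal θ v
  have i2 : Integrable (fun t => x0 (t - θ)) := hx0.comp_sub_right θ
  have hle : ∫ t in A, x0 (t - θ) ≤ ∫ t, x0 t := by
    rw [← integral_sub_right_eq_self x0 θ]
    exact setIntegral_le_integral i2 (Eventually.of_forall fun t => (Real.exp_pos _).le)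
  calc ∫ t in A, gaussianPDFReal μ v t
      ≤ ∫ t in A, (C / d ^ 2 * gaussianPDFReal θ v t + C * d * c * x0 (t - θ)) :=
        setIntegral_mono (integrable_gaussianPDFReal μ v).integrableOn
          ((i1.const_mul _).add (i2.const_mul _)).integrableOn hpt
    _ = C / d ^ 2 * (∫ t in A, gaussianPDFReal θ v t) + C * d * c * ∫ t in A, x0 (t - θ) := by
        rw [integral_add (i1.const_mul _).integrableOn (i2.const_mul _).integrableOn,
          integral_const_mul, integral_const_mul]
    _ ≤ C / d ^ 2 * (δ * d ^ 2 / (4 * C)) + C * d * c * ∫ t, x0 t := by gcongr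
    _ = δ / 4 + C * d * J := by rw [hJ]; field_simp
    _ ≤ δ / 4 + C * d * (J + 1) := by gcongr; linarith
    _ = δ / 4 + δ / 4 := by rw [hd]; field_simp
    _ < δ := by linarith

lemma split_real (μ : ℝ) (v : NNReal) (T : Set ℝ) (y : ℝ) :
    (gaussianReal μ v).real T = (gaussianReal μ v).real (T ∩ Set.Iic y) +
      (gaussianReal μ v).real (T ∩ Set.Ioi y) := by
  rw [← Set.compl_Iic, ← Set.sdiff_eq]
  exact (measureReal_inter_add_sdiff measurableSet_Iic).symm

lemma FTN_anti (σ : ℝ) (hσ : 0 < σ) (y : ℝ) (T : Set ℝ) (hT : MeasurableSet T) (μ₁ μ₂ : ℝ)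
    (h : μ₁ ≤ μ₂) : FTN y μ₂ (σ ^ 2) T ≤ FTN y μ₁ (σ ^ 2) T := by
  have hv : (NNReal.mk (σ ^ 2) (sq_nonneg σ)) ≠ 0 := by
    intro h; exact (pow_pos hσ 2).ne' (congrArg NNReal.toReal h)
  rw [FTN_eq σ hσ, FTN_eq σ hσ, split_real μ₁ _ T y, split_real μ₂ _ T y]
  generalize hvv : (NNReal.mk (σ ^ 2) (sq_nonneg σ)) = v at *
  have hv0 : (0 : ℝ) < v := by positivity
  let r : ℝ → ℝ := fun t => Real.exp (((μ₂ - μ₁) * t - (μ₂ ^ 2 - μ₁ ^ 2) / 2) / v)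
  have hr : Monotone r := by
    intro a b hab
    simp only [r]
    have : 0 ≤ μ₂ - μ₁ := by linarith
    gcongr
  have hrp : ∀ t, gaussianPDFReal μ₂ v t = r t * gaussianPDFReal μ₁ v t := by
    intro t
    simp only [gaussianPDFReal, r]
    rw [mul_left_comm, ← Real.exp_add]
    congr 2
    field_simp
    ring
  have hA : (gaussianReal μ₂ v).real (T ∩ Set.Iic y) ≤
      r y * (gaussianReal μ₁ v).real (T ∩ Set.Iic y) := by
    rw [gr_real _ _ hv, gr_real _ _ hv, ← integral_const_mul]
    refine setIntegral_mono_on (integrable_gaussianPDFReal _ v).integrableOn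
      ((integrable_gaussianPDFReal _ v).const_mul _).integrableOn
      (hT.inter measurableSet_Iic) fun t ht => ?_
    rw [hrp]
    exact mul_le_mul_of_nonneg_right (hr ht.2) (gaussianPDFReal_nonneg _ _ _)
  have hB : r y * (gaussianReal μ₁ v).real (T ∩ Set.Ioi y) ≤
      (gaussianReal μ₂ v).real (T ∩ Set.Ioi y) := by
    rw [gr_real _ _ hv, gr_real _ _ hv, ← integral_const_mul]
    refine setIntegral_mono_on
      ((integrable_gaussianPDFReal _ v).const_mul _).integrableOn
      (integrable_gaussianPDFReal _ v).integrableOn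
      (hT.inter measurableSet_Ioi) fun t ht => ?_
    rw [hrp]
    exact mul_le_mul_of_nonneg_right (hr (le_of_lt ht.2)) (gaussianPDFReal_nonneg _ _ _)
  have p1 := measureReal_nonneg (μ := gaussianReal μ₁ v) (s := T ∩ Set.Iic y)
  have p2 := measureReal_nonneg (μ := gaussianReal μ₁ v) (s := T ∩ Set.Ioi y)
  have p3 := measureReal_nonneg (μ := gaussianReal μ₂ v) (s := T ∩ Set.Iic y)
  have p4 := measureReal_nonneg (μ := gaussianReal μ₂ v) (s := T ∩ Set.Ioi y)
  have p5 : 0 < r y := Real.exp_pos _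
  generalize (gaussianReal μ₁ v).real (T ∩ Set.Iic y) = a1 at *
  generalize (gaussianReal μ₁ v).real (T ∩ Set.Ioi y) = b1 at *
  generalize (gaussianReal μ₂ v).real (T ∩ Set.Iic y) = a2 at *
  generalize (gaussianReal μ₂ v).real (T ∩ Set.Ioi y) = b2 at *
  generalize r y = ρ at *
  rcases (add_nonneg p1 p2).eq_or_lt with h1 | h1
  · have : a1 = 0 := by linarith
    subst this
    have : a2 = 0 := by linarith
    simp [this]
  rcases (add_nonneg p3 p4).eq_or_lt with h2 | h2
  · rw [← h2, div_zero]; positivity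
  rw [div_le_div_iff₀ h2 h1]
  nlinarith [mul_le_mul_of_nonneg_right hA p2, mul_le_mul_of_nonneg_left hB p1]

/-- Uniform closeness of the truncated and untruncated CDF. -/
lemma FTN_bounds (σ : ℝ) (hσ : 0 < σ) (y μ δ : ℝ) (T : Set ℝ) (hT : MeasurableSet T)
    (hδ : (gaussianReal μ (NNReal.mk (σ ^ 2) (sq_nonneg σ))).real Tᶜ < δ) (hδ1 : δ ≤ 1) :
    Phi ((y - μ) / σ) - δ < FTN y μ (σ ^ 2) T ∧ FTN y μ (σ ^ 2) T < Phi ((y - μ) / σ) + δ := by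
  rw [FTN_eq σ hσ, ← real_Iic σ hσ]
  generalize (NNReal.mk (σ ^ 2) (sq_nonneg σ)) = v at *
  have h1 := split_real μ v T y
  have h2 : (gaussianReal μ v).real T + (gaussianReal μ v).real Tᶜ = 1 := by
    rw [probReal_compl_eq_one_sub hT]; ring
  have h3 : (gaussianReal μ v).real (Set.Iic y) ≤
      (gaussianReal μ v).real (T ∩ Set.Iic y) + (gaussianReal μ v).real Tᶜ := by
    refine (measureReal_mono ?_).trans (measureReal_union_le _ _)
    intro t ht
    by_cases h : t ∈ T
    · exact Or.inl ⟨h, ht⟩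
    · exact Or.inr h
  have h4 : (gaussianReal μ v).real (T ∩ Set.Iic y) ≤ (gaussianReal μ v).real (Set.Iic y) :=
    measureReal_mono Set.inter_subset_right
  have h5 : (gaussianReal μ v).real (Set.Ioi y) ≤
      (gaussianReal μ v).real (T ∩ Set.Ioi y) + (gaussianReal μ v).real Tᶜ := by
    refine (measureReal_mono ?_).trans (measureReal_union_le _ _)
    intro t ht
    by_cases h : t ∈ T
    · exact Or.inl ⟨h, ht⟩
    · exact Or.inr h
  have h6 : (gaussianReal μ v).real (Set.Ioi y) = 1 - (gaussianReal μ v).real (Set.Iic y) := by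
    rw [← Set.compl_Iic, probReal_compl_eq_one_sub measurableSet_Iic]
  have p1 := measureReal_nonneg (μ := gaussianReal μ v) (s := T ∩ Set.Iic y)
  have p2 := measureReal_nonneg (μ := gaussianReal μ v) (s := T ∩ Set.Ioi y)
  have p3 := measureReal_nonneg (μ := gaussianReal μ v) (s := Tᶜ)
  generalize (gaussianReal μ v).real (T ∩ Set.Iic y) = a at *
  generalize (gaussianReal μ v).real (T ∩ Set.Ioi y) = b at *
  generalize (gaussianReal μ v).real T = τ at *
  generalize (gaussianReal μ v).real Tᶜ = κ at *
  generalize (gaussianReal μ v).real (Set.Iic y) = p at *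
  have hτ : 0 < τ := by linarith
  constructor
  · rw [lt_div_iff₀ hτ]
    rcases le_total 0 (p - δ) with h | h
    · nlinarith
    · nlinarith
  · rw [div_lt_iff₀ hτ]
    have : 1 - p - δ < b := by linarith
    rcases le_total 0 (1 - p - δ) with h | h <;> nlinarith

theorem stmt15_aux (σ : ℝ) (hσ : 0 < σ) (α : ℝ) (hα : α ∈ Set.Ioo (0 : ℝ) 1)
    (zα : ℝ) (hzα : Phi zα = α)
    (θ : ℕ → ℝ) (T : ℕ → Set ℝ) (hT : ∀ m, MeasurableSet (T m))
    (hTprob : Tendsto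
      (fun m => gaussianReal (θ m) (NNReal.mk (σ ^ 2) (sq_nonneg σ)) (T m)) atTop (nhds 1))
    (u : ℕ → ℝ → ℝ) (humeas : ∀ m, Measurable (u m))
    (hu : ∀ m, ∀ y ∈ T m, FTN y (u m y) (σ ^ 2) (T m) = 1 - α) :
    ∀ ε > (0 : ℝ), Tendsto
      (fun m => gaussianReal (θ m) (NNReal.mk (σ ^ 2) (sq_nonneg σ))
          {y ∈ T m | ε < |u m y - (y + zα * σ)|} /
        gaussianReal (θ m) (NNReal.mk (σ ^ 2) (sq_nonneg σ)) (T m))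
      atTop (nhds 0) := by
  intro ε hε
  have hv : (NNReal.mk (σ ^ 2) (sq_nonneg σ)) ≠ 0 := by
    intro h; exact (pow_pos hσ 2).ne' (congrArg NNReal.toReal h)
  suffices H : Tendsto (fun m => gaussianReal (θ m) (NNReal.mk (σ ^ 2) (sq_nonneg σ))
          {y ∈ T m | ε < |u m y - (y + zα * σ)|}) atTop (nhds 0) by
    simpa using ENNReal.Tendsto.div H (Or.inr one_ne_zero) hTprob (Or.inl ENNReal.one_ne_top)
  -- real version of the hypothesis on complements
  have hcomp : Tendsto (fun m => (gaussianReal (θ m) (NNReal.mk (σ ^ 2) (sq_nonneg σ))).real (T m)ᶜ)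
      atTop (nhds 0) := by
    have h1 := (ENNReal.tendsto_toReal ENNReal.one_ne_top).comp hTprob
    have h2 := h1.const_sub 1
    simp only [ENNReal.toReal_one, sub_self] at h2
    refine h2.congr fun m => ?_
    rw [probReal_compl_eq_one_sub (hT m)]; rfl
  have hz : Phi (-zα) = 1 - α := by rw [Phi_neg, hzα]
  have hεσ : 0 < ε / σ := by positivity
  have hp : 1 - α < Phi (-zα + ε / σ) := by
    rw [← hz]; exact Phi_strictMono (by linarith)
  have hq : Phi (-zα - ε / σ) < 1 - α := by
    rw [← hz]; exact Phi_strictMono (by linarith)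
  obtain ⟨δ, hδ0, hδ1, hδp, hδq⟩ : ∃ δ > 0, δ ≤ 1 ∧ δ ≤ Phi (-zα + ε / σ) - (1 - α) ∧
      δ ≤ (1 - α) - Phi (-zα - ε / σ) := by
    refine ⟨min 1 (min (Phi (-zα + ε / σ) - (1 - α)) ((1 - α) - Phi (-zα - ε / σ))),
      lt_min one_pos (lt_min (by linarith) (by linarith)), min_le_left _ _,
      (min_le_right _ _).trans (min_le_left _ _), (min_le_right _ _).trans (min_le_right _ _)⟩
  rw [ENNReal.tendsto_nhds_zero]
  intro e he
  -- choose the tail radius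
  obtain ⟨K, hK0, hK⟩ : ∃ K : ℝ, 0 < K ∧ ENNReal.ofReal (σ ^ 2 / K ^ 2) ≤ e := by
    have h1 : Tendsto (fun K : ℝ => ENNReal.ofReal (σ ^ 2 / K ^ 2)) atTop (nhds 0) := by
      rw [← ENNReal.ofReal_zero]
      refine ENNReal.tendsto_ofReal ?_
      exact Tendsto.div_atTop tendsto_const_nhds (tendsto_pow_atTop two_ne_zero)
    obtain ⟨K, h2, h3⟩ := ((eventually_gt_atTop 0).and
      ((ENNReal.tendsto_nhds_zero.1 h1) e he)).exists
    exact ⟨K, h2, h3⟩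
  obtain ⟨η, hη, hkey⟩ := key (NNReal.mk (σ ^ 2) (sq_nonneg σ)) hv (K + |zα * σ| + ε) δ hδ0
  filter_upwards [hcomp.eventually (gt_mem_nhds hη)] with m hm
  have htail : gaussianReal (θ m) (NNReal.mk (σ ^ 2) (sq_nonneg σ)) {y | K ≤ |y - θ m|} ≤ e := by
    have := meas_ge_le_variance_div_sq (μ := gaussianReal (θ m) (NNReal.mk (σ ^ 2) (sq_nonneg σ)))
      (X := id) (memLp_id_gaussianReal' 2 (by norm_num)) hK0
    rw [variance_id_gaussianReal, show ∫ x, id x ∂(gaussianReal (θ m) (NNReal.mk (σ ^ 2) (sq_nonneg σ))) = θ m from integral_id_gaussianReal] at this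
    exact this.trans hK
  refine (measure_mono ?_).trans htail
  rintro y ⟨hy, hyε⟩
  by_contra hcon
  simp only [Set.mem_ofPred_eq, not_le] at hcon
  have hc := abs_lt.1 hcon
  have hzz := neg_abs_le (zα * σ)
  have hzz' := le_abs_self (zα * σ)
  have hF := hu m y hy
  rcases lt_abs.1 hyε with h | h
  · have hb := (FTN_bounds σ hσ y (y + zα * σ + ε) δ (T m) (hT m)
      (hkey (θ m) _ _ (abs_le.2 ⟨by linarith, by linarith⟩) hm.le) hδ1).2
    have e1 : (y - (y + zα * σ + ε)) / σ = -zα - ε / σ := by field_simp; ring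
    rw [e1] at hb
    have := FTN_anti σ hσ y (T m) (hT m) (y + zα * σ + ε) (u m y) (by linarith)
    linarith
  · have hb := (FTN_bounds σ hσ y (y + zα * σ - ε) δ (T m) (hT m)
      (hkey (θ m) _ _ (abs_le.2 ⟨by linarith, by linarith⟩) hm.le) hδ1).1
    have e1 : (y - (y + zα * σ - ε)) / σ = -zα + ε / σ := by field_simp; ring
    rw [e1] at hb
    have := FTN_anti σ hσ y (T m) (hT m) (u m y) (y + zα * σ - ε) (by linarith)
    linarith

theorem stmt15 (σ : ℝ) (hσ : 0 < σ) (α : ℝ) (hα : α ∈ Set.Ioo (0 : ℝ) 1)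
    (zα : ℝ) (hzα : Phi zα = α)
    (θ : ℕ → ℝ) (T : ℕ → Set ℝ) (hT : ∀ m, MeasurableSet (T m))
    (hTprob : Tendsto
      (fun m => gaussianReal (θ m) ⟨σ ^ 2, sq_nonneg σ⟩ (T m)) atTop (nhds 1))
    (u : ℕ → ℝ → ℝ) (humeas : ∀ m, Measurable (u m))
    (hu : ∀ m, ∀ y ∈ T m, FTN y (u m y) (σ ^ 2) (T m) = 1 - α) :
    ∀ ε > (0 : ℝ), Tendsto
      (fun m => gaussianReal (θ m) ⟨σ ^ 2, sq_nonneg σ⟩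
          {y ∈ T m | ε < |u m y - (y + zα * σ)|} /
        gaussianReal (θ m) ⟨σ ^ 2, sq_nonneg σ⟩ (T m))
      atTop (nhds 0) := by
  exact stmt15_aux σ hσ α hα zα hzα θ T hT hTprob u humeas hu
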